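/- Let b > 1/2 and b' ≤ 5/8. There exists a constant C > 0 such that for every δ ∈ (0, 1] and all measurable functions f₁, f₂ : ℝ² → [0, ∞) satisfying f_j(τ, ξ) = 0 whenever |ξ| > δ^{-1} (j = 1, 2), one has ( ∫∫_{ℝ²} 𝟙_{|ξ| ≤ δ^{-1}} · |ξ|² · ⟨τ − p̃_δ(ξ)⟩^{2(b'−1)} · ( ∫∫_{ℝ²} f₁(τ₁, ξ₁) f₂(τ − τ₁, ξ − ξ₁) ⟨τ₁ − p̃_δ(ξ₁)⟩^{−b} ⟨(τ − τ₁) − p̃_δ(ξ − ξ₁)⟩^{−b} dτ₁ dξ₁ )² dτ dξ )^{1/2} ≤ C · ‖f₁‖_{L²(ℝ²)} · ‖f₂‖_{L²(ℝ²)}. -/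

import Mathlib

/-!
The Kenig–Ponce–Vega argument for KdV, run on the low-frequency region with constants uniform
in `δ`. By Cauchy–Schwarz in `(τ₁, ξ₁)` and Tonelli, the estimate follows from a uniform bound on
the weight `|ξ|² ⟨τ - p̃_δ(ξ)⟩^{2(b'-1)}` times the squared `L²` norm of the kernel
(`weighted_kernel_le`). Integrating in `τ₁` (`lintegral_jap_mul_jap`) leaves
`∫ ⟨τ - p̃_δ(ξ₁) - p̃_δ(ξ - ξ₁)⟩^{-2b} dξ₁`.

With `ξ₁ = ξ/2 + η`, the resonance function `R(η) = p̃_δ(ξ/2 + η) + p̃_δ(ξ/2 - η)` depends on `η²`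
only. Each summand of the defining series has an explicit increment in `η²` of the sign of `ξ`, and
the first one alone gives `|R(η) - R(η')| ≥ |ξ| |η² - η'²| / 8` (`reson_lower`). Choosing `η₀` to
minimise `|τ - R|` on the compact low-frequency region turns this into
`|τ - R(η)| ≥ |ξ| |η² - η₀²| / 16` (`exists_center`), so the remaining integral is bounded both by
`C / (|ξ| η₀)` and by `C / |ξ|^{1/2}`. If `η₀ ≳ |ξ|`, the first bound absorbs `|ξ|²`. Otherwise, since
`R(ξ/2) = p̃_δ(ξ)`, one has `⟨τ - p̃_δ(ξ)⟩ ≳ |ξ|³`, and the weight absorbs the missing `|ξ|^{3/2}`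
(`weighted_slice_le`).
-/

open Real MeasureTheory

/-- Japanese bracket `⟨x⟩ = (1 + x²)^{1/2}`. -/
noncomputable def jap (x : ℝ) : ℝ := Real.sqrt (1 + x ^ 2)

/-- The Fourier multiplier of the scaled ILW dispersion operator:
`L_δ(ξ) = 6ξ² ∑_{k=1}^∞ 1/(k²π² + δ²ξ²)`. -/
noncomputable def Ldelta (δ ξ : ℝ) : ℝ :=
  6 * ξ ^ 2 * ∑' k : ℕ, 1 / (((k : ℝ) + 1) ^ 2 * Real.pi ^ 2 + δ ^ 2 * ξ ^ 2)

/-- The dispersion symbol `p̃_δ(ξ) = ξ·L_δ(ξ)` of the scaled ILW. -/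
noncomputable def ptilde (δ ξ : ℝ) : ℝ := ξ * Ldelta δ ξ

/-! ### Japanese brackets and one-dimensional integrals -/

lemma jap_one_le (x : ℝ) : 1 ≤ jap x := by
  unfold jap
  exact Real.one_le_sqrt.mpr (by nlinarith [sq_nonneg x])

lemma jap_pos (x : ℝ) : 0 < jap x := lt_of_lt_of_le one_pos (jap_one_le x)

lemma jap_le_jap {x y : ℝ} (h : |x| ≤ |y|) : jap x ≤ jap y := by
  unfold jap
  exact Real.sqrt_le_sqrt (by linarith [sq_le_sq.mpr h])

lemma abs_le_jap (x : ℝ) : |x| ≤ jap x := by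
  unfold jap
  exact Real.abs_le_sqrt (by linarith)

lemma jap_rpow_le {x y c : ℝ} (hc : 0 ≤ c) (h : |x| ≤ |y|) :
    jap y ^ (-c) ≤ jap x ^ (-c) :=
  Real.rpow_le_rpow_of_nonpos (jap_pos x) (jap_le_jap h) (by linarith)

lemma jap_rpow_nonneg (x c : ℝ) : 0 ≤ jap x ^ c := Real.rpow_nonneg (jap_pos x).le c

lemma jap_le_two_mul_of_sq (y : ℝ) : jap y ≤ 2 * jap (y ^ 2) := by
  unfold jap
  rw [Real.sqrt_le_left (by positivity), mul_pow, Real.sq_sqrt (by positivity)]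
  nlinarith [sq_nonneg (y ^ 2 - 1)]

lemma jap_sum_le (x y : ℝ) : jap (x + y) ≤ 2 * max (jap x) (jap y) := by
  have key : ∀ u v : ℝ, |u| ≤ |v| → jap (u + v) ≤ 2 * jap v := by
    intro u v h
    unfold jap
    rw [Real.sqrt_le_left (by positivity), mul_pow, Real.sq_sqrt (by positivity)]
    nlinarith [sq_le_sq.mpr h, sq_nonneg (u - v)]
  rcases le_total |x| |y| with h | h
  · exact (key x y h).trans (by gcongr; exact le_max_right _ _)
  · rw [add_comm]
    exact (key y x h).trans (by gcongr; exact le_max_left _ _)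

lemma rpow_neg_le_of_le_two_mul {x y c : ℝ} (hx : 0 < x) (hc : 0 ≤ c) (h : x ≤ 2 * y) :
    y ^ (-c) ≤ 2 ^ c * x ^ (-c) := by
  have h2 : (2 * y) ^ (-c) ≤ x ^ (-c) := Real.rpow_le_rpow_of_nonpos hx h (by linarith)
  have hy : 0 < y := by linarith
  rw [Real.mul_rpow (by norm_num) hy.le] at h2
  calc y ^ (-c) = 2 ^ c * (2 ^ (-c) * y ^ (-c)) := by
        rw [← mul_assoc, ← Real.rpow_add (by norm_num)]; simp
    _ ≤ _ := by gcongr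

/-- Since `⟨x + y⟩` is controlled by the larger of `⟨x⟩` and `⟨y⟩`, one of the two factors can be
traded for `⟨x + y⟩^{-c}`. -/
lemma jap_mul_jap_le {c : ℝ} (hc : 0 ≤ c) (x y : ℝ) :
    jap x ^ (-c) * jap y ^ (-c)
      ≤ 2 ^ c * jap (x + y) ^ (-c) * (jap x ^ (-c) + jap y ^ (-c)) := by
  have hx := jap_rpow_nonneg x (-c)
  have hy := jap_rpow_nonneg y (-c)
  have hxy := mul_nonneg (Real.rpow_nonneg zero_le_two c) (jap_rpow_nonneg (x + y) (-c))
  have h := jap_sum_le x y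
  rcases le_total (jap x) (jap y) with h' | h'
  · rw [max_eq_right h'] at h
    have := rpow_neg_le_of_le_two_mul (jap_pos _) hc h
    nlinarith [mul_le_mul_of_nonneg_left this hx, mul_nonneg hxy hy]
  · rw [max_eq_left h'] at h
    have := rpow_neg_le_of_le_two_mul (jap_pos _) hc h
    nlinarith [mul_le_mul_of_nonneg_right this hy, mul_nonneg hxy hx]

lemma continuous_jap : Continuous jap := by unfold jap; fun_prop

@[fun_prop]
lemma measurable_jap : Measurable jap := continuous_jap.measurable

/-- The one-dimensional mass `∫ ⟨x⟩^{-c} dx`, finite for `c > 1`. -/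
noncomputable def japMass (c : ℝ) : ℝ := ∫ x, jap x ^ (-c)

lemma japMass_nonneg (c : ℝ) : 0 ≤ japMass c :=
  integral_nonneg fun x => jap_rpow_nonneg x _

lemma lintegral_jap {c : ℝ} (hc : 1 < c) :
    ∫⁻ x, ENNReal.ofReal (jap x ^ (-c)) = ENNReal.ofReal (japMass c) := by
  have hi : Integrable fun x : ℝ => jap x ^ (-c) := by
    have := integrable_rpow_neg_one_add_norm_sq (E := ℝ) (μ := volume) (r := c) (by simpa using hc)
    refine this.congr (ae_of_all _ fun x => ?_)
    simp only [jap, Real.sqrt_eq_rpow, Real.norm_eq_abs, sq_abs]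
    rw [← Real.rpow_mul (by positivity)]
    congr 1; ring
  rw [japMass, ofReal_integral_eq_lintegral_ofReal hi (ae_of_all _ fun x => jap_rpow_nonneg x _)]

lemma lintegral_jap_affine {c A : ℝ} (hc : 1 < c) (hA : 0 < A) (x₀ : ℝ) :
    ∫⁻ x, ENNReal.ofReal (jap (A * (x - x₀)) ^ (-c)) = ENNReal.ofReal (japMass c / A) := by
  rw [lintegral_sub_right_eq_self (fun x => ENNReal.ofReal (jap (A * x) ^ (-c))) x₀]
  have hm : Measurable fun x => ENNReal.ofReal (jap x ^ (-c)) :=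
    by fun_prop
  have h := lintegral_map (μ := (volume : Measure ℝ)) hm (measurable_const_mul A)
  rw [Real.map_volume_mul_left hA.ne', lintegral_smul_measure, lintegral_jap hc,
    abs_of_pos (inv_pos.mpr hA)] at h
  rw [← h, smul_eq_mul, ← ENNReal.ofReal_mul (inv_pos.mpr hA).le]
  congr 1; ring

/-- The convolution bound `⟨·⟩^{-c} * ⟨·⟩^{-c} ≲ ⟨·⟩^{-c}` with explicit constant. -/
lemma lintegral_jap_mul_jap {c : ℝ} (hc : 1 < c) (τ α β : ℝ) :
    ∫⁻ t, ENNReal.ofReal (jap (t - α) ^ (-c) * jap ((τ - t) - β) ^ (-c))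
      ≤ ENNReal.ofReal (2 ^ c * (2 * japMass c)) * ENNReal.ofReal (jap (τ - α - β) ^ (-c)) := by
  have hM := japMass_nonneg c
  have h2 : (0 : ℝ) ≤ 2 ^ c := by positivity
  have hj := jap_rpow_nonneg (τ - α - β) (-c)
  have e1 : ∫⁻ t, ENNReal.ofReal (jap (t - α) ^ (-c)) = ENNReal.ofReal (japMass c) := by
    simpa using lintegral_jap_affine hc one_pos α
  have e2 : ∫⁻ t, ENNReal.ofReal (jap ((τ - t) - β) ^ (-c)) = ENNReal.ofReal (japMass c) := by
    have := lintegral_sub_left_eq_self (μ := volume)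
      (fun t => ENNReal.ofReal (jap (t - β) ^ (-c))) τ
    rw [this]
    simpa using lintegral_jap_affine hc one_pos β
  calc _ ≤ ∫⁻ t, ENNReal.ofReal (2 ^ c * jap (τ - α - β) ^ (-c)) *
        (ENNReal.ofReal (jap (t - α) ^ (-c)) + ENNReal.ofReal (jap ((τ - t) - β) ^ (-c))) := by
        refine lintegral_mono fun t => ?_
        rw [← ENNReal.ofReal_add (jap_rpow_nonneg _ _) (jap_rpow_nonneg _ _),
          ← ENNReal.ofReal_mul (by positivity)]
        apply ENNReal.ofReal_le_ofReal
        have := jap_mul_jap_le (by linarith : 0 ≤ c) (t - α) ((τ - t) - β)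
        rwa [show t - α + (τ - t - β) = τ - α - β by ring] at this
    _ = ENNReal.ofReal (2 ^ c * jap (τ - α - β) ^ (-c)) *
        (ENNReal.ofReal (japMass c) + ENNReal.ofReal (japMass c)) := by
        rw [lintegral_const_mul _ (by fun_prop),
          lintegral_add_left (by fun_prop), e1, e2]
    _ = _ := by
        rw [← ENNReal.ofReal_add hM hM, ← ENNReal.ofReal_mul (by positivity),
          ← ENNReal.ofReal_mul (by positivity)]
        congr 1; ring

/-- Non-degenerate bound: one of `|η ± η₀|` is at least `η₀`, so the phase `A (η² - η₀²)` dominates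
a linear one of slope `A η₀`. -/
lemma lintegral_jap_quad_linear {c A η₀ : ℝ} (hc : 1 < c) (hA : 0 < A) (h0 : 0 < η₀) :
    ∫⁻ η, ENNReal.ofReal (jap (A * (η ^ 2 - η₀ ^ 2)) ^ (-c))
      ≤ ENNReal.ofReal (2 * japMass c / (A * η₀)) := by
  have hM := japMass_nonneg c
  have hA0 : 0 < A * η₀ := by positivity
  calc _ ≤ ∫⁻ η, (ENNReal.ofReal (jap (A * η₀ * (η - η₀)) ^ (-c)) +
        ENNReal.ofReal (jap (A * η₀ * (η - -η₀)) ^ (-c))) := by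
        refine lintegral_mono fun η => ?_
        rw [← ENNReal.ofReal_add (jap_rpow_nonneg _ _) (jap_rpow_nonneg _ _)]
        apply ENNReal.ofReal_le_ofReal
        have n1 := jap_rpow_nonneg (A * η₀ * (η - η₀)) (-c)
        have n2 := jap_rpow_nonneg (A * η₀ * (η - -η₀)) (-c)
        have e : |A * (η ^ 2 - η₀ ^ 2)| = A * (|η - η₀| * |η + η₀|) := by
          rw [abs_mul, abs_of_pos hA, ← abs_mul]; ring_nf
        rcases le_total 0 η with h | h
        · have := jap_rpow_le (x := A * η₀ * (η - η₀)) (y := A * (η ^ 2 - η₀ ^ 2))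
            (by linarith : 0 ≤ c) (by
              rw [e, abs_mul, abs_of_pos hA0, mul_assoc]
              have : η₀ ≤ |η + η₀| := le_trans (by linarith) (le_abs_self _)
              rw [mul_comm η₀]
              gcongr)
          linarith
        · have := jap_rpow_le (x := A * η₀ * (η - -η₀)) (y := A * (η ^ 2 - η₀ ^ 2))
            (by linarith : 0 ≤ c) (by
              rw [e, abs_mul, abs_of_pos hA0, mul_assoc, sub_neg_eq_add]
              have : η₀ ≤ |η - η₀| := le_trans (by linarith) (neg_le_abs _)
              gcongr)
          linarith
    _ = _ := by
        rw [lintegral_add_left (by fun_prop),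
          lintegral_jap_affine hc hA0, lintegral_jap_affine hc hA0,
          ← ENNReal.ofReal_add (by positivity) (by positivity)]
        congr 1; ring

/-- Degenerate bound, uniform in `η₀`: with `m = min |η ± η₀|` one has `|η² - η₀²| ≥ m²`. -/
lemma lintegral_jap_quad_sqrt {c A : ℝ} (hc : 1 < c) (hA : 0 < A) (η₀ : ℝ) :
    ∫⁻ η, ENNReal.ofReal (jap (A * (η ^ 2 - η₀ ^ 2)) ^ (-c))
      ≤ ENNReal.ofReal (2 ^ c * (2 * japMass c) / √A) := by
  have hM := japMass_nonneg c
  have hs : 0 < √A := Real.sqrt_pos.mpr hA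
  have h2 : (0 : ℝ) ≤ 2 ^ c := by positivity
  have key : ∀ η z : ℝ, z ^ 2 ≤ |η ^ 2 - η₀ ^ 2| →
      jap (A * (η ^ 2 - η₀ ^ 2)) ^ (-c) ≤ 2 ^ c * jap (√A * z) ^ (-c) := by
    intro η z hz
    refine (jap_rpow_le (x := (√A * z) ^ 2) (by linarith : 0 ≤ c) ?_).trans
      (rpow_neg_le_of_le_two_mul (jap_pos _) (by linarith) (jap_le_two_mul_of_sq _))
    rw [abs_of_nonneg (sq_nonneg _), mul_pow, Real.sq_sqrt hA.le, abs_mul, abs_of_pos hA]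
    gcongr
  calc _ ≤ ∫⁻ η, ENNReal.ofReal (2 ^ c) * (ENNReal.ofReal (jap (√A * (η - η₀)) ^ (-c)) +
        ENNReal.ofReal (jap (√A * (η - -η₀)) ^ (-c))) := by
        refine lintegral_mono fun η => ?_
        rw [← ENNReal.ofReal_add (jap_rpow_nonneg _ _) (jap_rpow_nonneg _ _),
          ← ENNReal.ofReal_mul h2]
        apply ENNReal.ofReal_le_ofReal
        have n1 := mul_nonneg h2 (jap_rpow_nonneg (√A * (η - η₀)) (-c))
        have n2 := mul_nonneg h2 (jap_rpow_nonneg (√A * (η - -η₀)) (-c))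
        have e : |η ^ 2 - η₀ ^ 2| = |η - η₀| * |η + η₀| := by
          rw [← abs_mul]; ring_nf
        rcases le_total |η - η₀| |η + η₀| with h | h
        · have := key η (η - η₀) (by
            rw [e, ← sq_abs, sq]; gcongr)
          linarith
        · have := key η (η - -η₀) (by
            rw [e, ← sq_abs, sq, sub_neg_eq_add]; gcongr)
          linarith
    _ = _ := by
        rw [lintegral_const_mul _ (by fun_prop),
          lintegral_add_left (by fun_prop),
          lintegral_jap_affine hc hs, lintegral_jap_affine hc hs,
          ← ENNReal.ofReal_add (by positivity) (by positivity), ← ENNReal.ofReal_mul h2]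
        congr 1; ring

/-! ### The dispersion symbol and the resonance function -/

lemma summand_denom_pos (δ ξ : ℝ) (k : ℕ) :
    0 < ((k : ℝ) + 1) ^ 2 * Real.pi ^ 2 + δ ^ 2 * ξ ^ 2 := by
  have := Real.pi_pos
  positivity

lemma summable_inv_sq_pi : Summable fun k : ℕ => 1 / (((k : ℝ) + 1) ^ 2 * Real.pi ^ 2) := by
  have h : Summable fun k : ℕ => 1 / ((k : ℝ) + 1) ^ 2 := by
    simpa using (summable_nat_add_iff 1).mpr (Real.summable_one_div_nat_pow.mpr one_lt_two)
  simpa [div_eq_mul_inv, mul_comm] using h.mul_left (Real.pi ^ 2)⁻¹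

lemma summand_le (δ ξ : ℝ) (k : ℕ) :
    1 / (((k : ℝ) + 1) ^ 2 * Real.pi ^ 2 + δ ^ 2 * ξ ^ 2)
      ≤ 1 / (((k : ℝ) + 1) ^ 2 * Real.pi ^ 2) := by
  have := Real.pi_pos
  exact one_div_le_one_div_of_le (by positivity) (by nlinarith [sq_nonneg (δ * ξ)])

lemma summable_summand (δ ξ : ℝ) :
    Summable fun k : ℕ => 1 / (((k : ℝ) + 1) ^ 2 * Real.pi ^ 2 + δ ^ 2 * ξ ^ 2) :=
  Summable.of_nonneg_of_le (fun k => (one_div_pos.mpr (summand_denom_pos δ ξ k)).le)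
    (summand_le δ ξ) summable_inv_sq_pi

lemma continuous_ptilde (δ : ℝ) : Continuous (ptilde δ) := by
  unfold ptilde Ldelta
  refine continuous_id.mul ((by fun_prop : Continuous fun ξ : ℝ => 6 * ξ ^ 2).mul ?_)
  refine continuous_tsum (fun k => ?_) summable_inv_sq_pi (fun k ξ => ?_)
  · exact continuous_const.div (by fun_prop) fun ξ => (summand_denom_pos δ ξ k).ne'
  · rw [Real.norm_of_nonneg (one_div_pos.mpr (summand_denom_pos δ ξ k)).le]
    exact summand_le δ ξ k

lemma hasSum_ptilde (δ ξ : ℝ) :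
    HasSum (fun k : ℕ => 6 * (ξ ^ 3 / (((k : ℝ) + 1) ^ 2 * Real.pi ^ 2 + δ ^ 2 * ξ ^ 2)))
      (ptilde δ ξ) := by
  have h := (summable_summand δ ξ).hasSum.mul_left (ξ * (6 * ξ ^ 2))
  rw [mul_assoc] at h
  exact h.congr_fun fun k => by ring

lemma ptilde_zero (δ : ℝ) : ptilde δ 0 = 0 := by simp [ptilde]

/-- The coefficient of `2u(s - t)`, `s = v²`, `t = w²`, in the increment between `v` and `w` of
`(u + v)³/(a + d(u + v)²) + (u - v)³/(a + d(u - v)²)`; in the application `a` is `k²π²`, `d = δ²`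
and `u = ξ/2`. -/
noncomputable def incr (a d u s t : ℝ) : ℝ :=
  a * ((a + d * u ^ 2 - d * t) * (2 * a + d * (s + t) - 2 * (d * u ^ 2)) +
      (a ^ 2 + 2 * a * d * (u ^ 2 + t) + d ^ 2 * (u ^ 2 - t) ^ 2)) /
    ((a ^ 2 + 2 * a * d * (u ^ 2 + s) + d ^ 2 * (u ^ 2 - s) ^ 2) *
      (a ^ 2 + 2 * a * d * (u ^ 2 + t) + d ^ 2 * (u ^ 2 - t) ^ 2))

/-- A symmetric pair of summands depends on `v` only through `v²`, and its increment in `v²` has an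
explicit closed form. -/
lemma summand_incr {a d : ℝ} (ha : 0 < a) (hd : 0 ≤ d) (u v w : ℝ) :
    ((u + v) ^ 3 / (a + d * (u + v) ^ 2) + (u - v) ^ 3 / (a + d * (u - v) ^ 2)) -
      ((u + w) ^ 3 / (a + d * (u + w) ^ 2) + (u - w) ^ 3 / (a + d * (u - w) ^ 2))
      = 2 * u * (v ^ 2 - w ^ 2) * incr a d u (v ^ 2) (w ^ 2) := by
  have key : ∀ v : ℝ,
      (u + v) ^ 3 / (a + d * (u + v) ^ 2) + (u - v) ^ 3 / (a + d * (u - v) ^ 2)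
        = 2 * u * (a * (u ^ 2 + 3 * v ^ 2) + d * (u ^ 2 - v ^ 2) ^ 2) /
          (a ^ 2 + 2 * a * d * (u ^ 2 + v ^ 2) + d ^ 2 * (u ^ 2 - v ^ 2) ^ 2) := by
    intro v
    have h1 : a + d * (u + v) ^ 2 ≠ 0 := by positivity
    have h2 : a + d * (u - v) ^ 2 ≠ 0 := by positivity
    have h3 : a ^ 2 + 2 * a * d * (u ^ 2 + v ^ 2) + d ^ 2 * (u ^ 2 - v ^ 2) ^ 2 ≠ 0 := by
      positivity
    rw [div_add_div _ _ h1 h2, div_eq_div_iff (mul_ne_zero h1 h2) h3]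
    ring
  rw [key, key, incr]
  have h3 : a ^ 2 + 2 * a * d * (u ^ 2 + v ^ 2) + d ^ 2 * (u ^ 2 - v ^ 2) ^ 2 ≠ 0 := by
    positivity
  have h4 : a ^ 2 + 2 * a * d * (u ^ 2 + w ^ 2) + d ^ 2 * (u ^ 2 - w ^ 2) ^ 2 ≠ 0 := by
    positivity
  rw [div_sub_div _ _ h3 h4, mul_div_assoc', div_left_inj' (mul_ne_zero h3 h4)]
  ring

lemma incr_ge {a d u s t : ℝ} (ha : 9 ≤ a) (hd : 0 ≤ d) (hs : 0 ≤ s) (ht : 0 ≤ t)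
    (hus : d * (u ^ 2 + s) ≤ 1) (hut : d * (u ^ 2 + t) ≤ 1) :
    1 / (4 * a) ≤ incr a d u s t := by
  have hD : ∀ r : ℝ, 0 ≤ r → d * (u ^ 2 + r) ≤ 1 →
      0 < a ^ 2 + 2 * a * d * (u ^ 2 + r) + d ^ 2 * (u ^ 2 - r) ^ 2 ∧
      a ^ 2 + 2 * a * d * (u ^ 2 + r) + d ^ 2 * (u ^ 2 - r) ^ 2 ≤ 2 * a ^ 2 := by
    intro r hr h
    refine ⟨by positivity, ?_⟩
    have h1 : d ^ 2 * (u ^ 2 - r) ^ 2 ≤ 1 := by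
      have : d ^ 2 * (u ^ 2 - r) ^ 2 ≤ (d * (u ^ 2 + r)) ^ 2 := by
        rw [mul_pow]
        gcongr ?_ * ?_
        nlinarith [mul_nonneg (sq_nonneg u) hr]
      exact this.trans (pow_le_one₀ (by positivity) h)
    nlinarith
  obtain ⟨p1, q1⟩ := hD s hs hus
  obtain ⟨p2, q2⟩ := hD t ht hut
  have hdu : 0 ≤ d * u ^ 2 := by positivity
  have hds : 0 ≤ d * s := by positivity
  have hdt : 0 ≤ d * t := by positivity
  have hnum : a ^ 2 ≤ (a + d * u ^ 2 - d * t) * (2 * a + d * (s + t) - 2 * (d * u ^ 2)) := by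
    have h1 : a - 1 ≤ a + d * u ^ 2 - d * t := by nlinarith
    have h2 : 2 * a - 2 ≤ 2 * a + d * (s + t) - 2 * (d * u ^ 2) := by nlinarith
    calc a ^ 2 ≤ (a - 1) * (2 * a - 2) := by nlinarith
      _ ≤ _ := mul_le_mul h1 h2 (by linarith) (by linarith)
  rw [incr, div_le_div_iff₀ (by positivity) (by positivity), one_mul]
  set D1 := a ^ 2 + 2 * a * d * (u ^ 2 + s) + d ^ 2 * (u ^ 2 - s) ^ 2
  set D2 := a ^ 2 + 2 * a * d * (u ^ 2 + t) + d ^ 2 * (u ^ 2 - t) ^ 2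
  calc D1 * D2 ≤ (2 * a ^ 2) * (2 * a ^ 2) := mul_le_mul q1 q2 p2.le (by positivity)
    _ = a * a ^ 2 * (4 * a) := by ring
    _ ≤ _ := by gcongr; linarith

/-- The resonance function `p̃_δ(ξ₁) + p̃_δ(ξ - ξ₁)` in the centred variable `η = ξ₁ - ξ/2`. -/
noncomputable def reson (δ ξ η : ℝ) : ℝ := ptilde δ (ξ / 2 + η) + ptilde δ (ξ / 2 - η)

lemma continuous_reson (δ ξ : ℝ) : Continuous (reson δ ξ) := by
  unfold reson
  have := continuous_ptilde δ
  fun_prop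

/-- The centred low-frequency region: both `ξ/2 + η` and `ξ/2 - η` are at most `δ⁻¹` in size. -/
def lowSet (δ ξ : ℝ) : Set ℝ := {η | |ξ / 2 + η| ≤ δ⁻¹ ∧ |ξ / 2 - η| ≤ δ⁻¹}

/-- Parallelogram identity: the two constraints bound `(ξ/2)² + η²` by `δ⁻²`. -/
lemma lowSet_bound {δ ξ η : ℝ} (hδ : 0 < δ) (h : η ∈ lowSet δ ξ) :
    δ ^ 2 * ((ξ / 2) ^ 2 + η ^ 2) ≤ 1 := by
  obtain ⟨h1, h2⟩ := h
  have h1' := sq_le_sq.mpr (h1.trans (le_abs_self _))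
  have h2' := sq_le_sq.mpr (h2.trans (le_abs_self _))
  calc δ ^ 2 * ((ξ / 2) ^ 2 + η ^ 2) ≤ δ ^ 2 * (δ⁻¹) ^ 2 := by gcongr; linarith
    _ = 1 := by field_simp

/-- On low frequencies the resonance function is, up to constants uniform in `δ`, at least as
non-degenerate in `η²` as the KdV one; only the first summand of the series is used. -/
lemma reson_lower {δ ξ v w : ℝ} (hδ : 0 < δ) (hv : v ∈ lowSet δ ξ) (hw : w ∈ lowSet δ ξ) :
    1 / 8 * |ξ| * |v ^ 2 - w ^ 2| ≤ |reson δ ξ v - reson δ ξ w| := by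
  have hπ := Real.pi_gt_three
  have hπ' := Real.pi_lt_d2
  have bv := lowSet_bound hδ hv
  have bw := lowSet_bound hδ hw
  have hS := (((hasSum_ptilde δ (ξ / 2 + v)).add (hasSum_ptilde δ (ξ / 2 - v))).sub
    ((hasSum_ptilde δ (ξ / 2 + w)).add (hasSum_ptilde δ (ξ / 2 - w))))
  have ha : ∀ k : ℕ, 9 ≤ ((k : ℝ) + 1) ^ 2 * Real.pi ^ 2 := by
    intro k
    have h1 : (1 : ℝ) ≤ ((k : ℝ) + 1) ^ 2 := one_le_pow₀ (by linarith [k.cast_nonneg (α := ℝ)])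
    nlinarith
  set J : ℕ → ℝ := fun k =>
    incr (((k : ℝ) + 1) ^ 2 * Real.pi ^ 2) (δ ^ 2) (ξ / 2) (v ^ 2) (w ^ 2) with hJ
  have hJk : ∀ k : ℕ, 1 / (4 * (((k : ℝ) + 1) ^ 2 * Real.pi ^ 2)) ≤ J k := fun k =>
    incr_ge (ha k) (sq_nonneg δ) (sq_nonneg v) (sq_nonneg w) bv bw
  have hJ0 : ∀ k, 0 ≤ J k := fun k => le_trans (by positivity) (hJk k)
  have hS' : HasSum (fun k : ℕ => 6 * ξ * (v ^ 2 - w ^ 2) * J k) (reson δ ξ v - reson δ ξ w) := by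
    refine hS.congr_fun fun (k : ℕ) => ?_
    have := summand_incr (a := ((k : ℝ) + 1) ^ 2 * Real.pi ^ 2) (by linarith [ha k])
      (sq_nonneg δ) (ξ / 2) v w
    rw [hJ]
    linear_combination (-6) * this
  have hA := hS'.summable.abs
  have habs : |reson δ ξ v - reson δ ξ w| = ∑' k, |6 * ξ * (v ^ 2 - w ^ 2)| * J k := by
    rw [← hS'.tsum_eq, tsum_mul_left, tsum_mul_left, abs_mul, abs_of_nonneg (tsum_nonneg hJ0)]
  have hA' : Summable fun k => |6 * ξ * (v ^ 2 - w ^ 2)| * J k := by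
    refine hA.congr fun k => ?_
    rw [abs_mul, abs_of_nonneg (hJ0 k)]
  rw [habs]
  refine le_trans ?_ (hA'.le_tsum 0 fun k _ => mul_nonneg (abs_nonneg _) (hJ0 k))
  have h0 := hJk 0
  have h1 : 1 / 40 ≤ J 0 := by
    refine le_trans ?_ h0
    apply one_div_le_one_div_of_le (by positivity)
    norm_num
    nlinarith
  rw [abs_mul, abs_mul, abs_of_pos (by norm_num : (0 : ℝ) < 6)]
  have := mul_nonneg (abs_nonneg ξ) (abs_nonneg (v ^ 2 - w ^ 2))
  nlinarith

/-- For every `τ` the phase `τ - reson` is bounded below by a multiple of `ξ (η² - η₀²)`, where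
`η₀` minimises it over the low-frequency region. -/
lemma exists_center {δ ξ : ℝ} (hδ : 0 < δ) (hξ : |ξ| ≤ δ⁻¹) (τ : ℝ) :
    ∃ η₀ : ℝ, 0 ≤ η₀ ∧ ∀ η ∈ lowSet δ ξ,
      |1 / 16 * |ξ| * (η ^ 2 - η₀ ^ 2)| ≤ |τ - reson δ ξ η| := by
  have hc : IsClosed (lowSet δ ξ) :=
    (isClosed_le (f := fun η : ℝ => |ξ / 2 + η|) (by fun_prop) continuous_const).inter
      (isClosed_le (f := fun η : ℝ => |ξ / 2 - η|) (by fun_prop) continuous_const)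
  have hcomp : IsCompact (lowSet δ ξ) := by
    refine (isCompact_Icc (a := -δ⁻¹) (b := δ⁻¹)).of_isClosed_subset hc fun η h => ?_
    have h1 := abs_le.mp h.1
    have h2 := abs_le.mp h.2
    exact ⟨by linarith, by linarith⟩
  -- `η = ξ/2` corresponds to the splitting `ξ = ξ + 0`.
  have hne : (lowSet δ ξ).Nonempty := ⟨ξ / 2, by
    have := inv_pos.mpr hδ
    simp only [lowSet, Set.mem_ofPred_eq, add_halves, sub_self, abs_zero]
    exact ⟨hξ, this.le⟩⟩
  obtain ⟨w, hw, hmin⟩ := hcomp.exists_isMinOn hne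
    (f := fun η => |τ - reson δ ξ η|)
    ((continuous_const.sub (continuous_reson δ ξ)).abs.continuousOn)
  refine ⟨|w|, abs_nonneg w, fun η hη => ?_⟩
  have h1 : |τ - reson δ ξ w| ≤ |τ - reson δ ξ η| := hmin hη
  have h2 := reson_lower hδ hη hw
  -- Minimality costs only a factor 2: `|R η - R w| ≤ 2 |τ - R η|`.
  have h3 : |reson δ ξ η - reson δ ξ w| ≤ |τ - reson δ ξ w| + |τ - reson δ ξ η| := by
    have := abs_sub (τ - reson δ ξ w) (τ - reson δ ξ η)
    rwa [show τ - reson δ ξ w - (τ - reson δ ξ η) = reson δ ξ η - reson δ ξ w by ring] at this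
  rw [sq_abs, abs_mul, abs_mul, abs_abs, abs_of_pos (by norm_num : (0 : ℝ) < 1 / 16)]
  linarith

/-! ### The weighted kernel and the bilinear estimate -/

lemma measurable_ptilde (δ : ℝ) : Measurable (ptilde δ) :=
  (continuous_ptilde δ).measurable

/-- Either `η₀ ≳ |ξ|` and the phase is non-degenerate, or `⟨τ - p̃_δ(ξ)⟩ ≳ |ξ|³` and the weight
compensates the loss in the degenerate bound. -/
lemma weighted_slice_le {c b' δ ξ τ : ℝ} (hc : 1 < c) (hb' : b' ≤ 5 / 8) (hδ : 0 < δ)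
    (hξ : |ξ| ≤ δ⁻¹) :
    ENNReal.ofReal (|ξ| ^ 2 * jap (τ - ptilde δ ξ) ^ (2 * (b' - 1))) *
      ∫⁻ x, Set.indicator {x : ℝ | |x| ≤ δ⁻¹ ∧ |ξ - x| ≤ δ⁻¹}
        (fun x => ENNReal.ofReal (jap (τ - ptilde δ x - ptilde δ (ξ - x)) ^ (-c))) x
      ≤ ENNReal.ofReal (2 ^ c * (2 * japMass c) * 48) := by
  have hM := japMass_nonneg c
  have h2 : (1 : ℝ) ≤ 2 ^ c := Real.one_le_rpow one_le_two (by linarith)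
  rcases eq_or_ne ξ 0 with rfl | hne
  · simp
  have hx : 0 < |ξ| := abs_pos.mpr hne
  obtain ⟨η₀, h0, hmin⟩ := exists_center hδ hξ τ
  set A := 1 / 16 * |ξ| with hA
  have hApos : 0 < A := by positivity
  have hI : ∫⁻ x, Set.indicator {x : ℝ | |x| ≤ δ⁻¹ ∧ |ξ - x| ≤ δ⁻¹}
        (fun x => ENNReal.ofReal (jap (τ - ptilde δ x - ptilde δ (ξ - x)) ^ (-c))) x
      ≤ ∫⁻ η, ENNReal.ofReal (jap (A * (η ^ 2 - η₀ ^ 2)) ^ (-c)) := by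
    rw [← lintegral_add_left_eq_self _ (ξ / 2)]
    refine lintegral_mono fun η => ?_
    have e : ξ - (ξ / 2 + η) = ξ / 2 - η := by ring
    by_cases hη : ξ / 2 + η ∈ {x : ℝ | |x| ≤ δ⁻¹ ∧ |ξ - x| ≤ δ⁻¹}
    · rw [Set.indicator_of_mem hη]
      have hη' : η ∈ lowSet δ ξ := ⟨hη.1, e ▸ hη.2⟩
      apply ENNReal.ofReal_le_ofReal
      rw [e, sub_sub]
      exact jap_rpow_le (by linarith) (hmin η hη')
    · rw [Set.indicator_of_notMem hη]
      exact bot_le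
  -- At `η = ξ/2` the resonance function equals `p̃_δ(ξ)`, so `τ - p̃_δ(ξ)` is a value of the phase.
  have hσ : |A * ((ξ / 2) ^ 2 - η₀ ^ 2)| ≤ jap (τ - ptilde δ ξ) := by
    have := hmin (ξ / 2) ⟨by rwa [add_halves], by simpa using (inv_pos.mpr hδ).le⟩
    rw [reson, add_halves, sub_self, ptilde_zero, add_zero] at this
    exact this.trans (abs_le_jap _)
  set S := jap (τ - ptilde δ ξ) with hS
  have hS1 : 1 ≤ S := jap_one_le _
  -- Only the decay `⟨τ - p̃_δ(ξ)⟩^{-1/2}` is needed, which `b' ≤ 5/8` gives with room to spare.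
  have hw : S ^ (2 * (b' - 1)) ≤ 1 / √S := by
    rw [Real.sqrt_eq_rpow, one_div, ← Real.rpow_neg (by linarith)]
    exact Real.rpow_le_rpow_of_exponent_le hS1 (by linarith)
  have hsS : 1 ≤ √S := Real.one_le_sqrt.mpr hS1
  refine (mul_le_mul_right hI _).trans ?_
  rcases le_total (|ξ| / 3) η₀ with h | h
  · have hη : 0 < η₀ := by linarith
    refine (mul_le_mul_right (lintegral_jap_quad_linear hc hApos hη) _).trans ?_
    rw [← ENNReal.ofReal_mul (by positivity)]
    apply ENNReal.ofReal_le_ofReal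
    have hw1 : S ^ (2 * (b' - 1)) ≤ 1 := hw.trans (by rw [div_le_one (by linarith)]; exact hsS)
    calc |ξ| ^ 2 * S ^ (2 * (b' - 1)) * (2 * japMass c / (A * η₀))
        ≤ |ξ| ^ 2 * 1 * (2 * japMass c / (A * (|ξ| / 3))) := by gcongr
      _ = 1 * (2 * japMass c) * 48 := by rw [hA]; field_simp; ring
      _ ≤ _ := by gcongr
  · refine (mul_le_mul_right (lintegral_jap_quad_sqrt hc hApos η₀) _).trans ?_
    rw [← ENNReal.ofReal_mul (by positivity)]
    apply ENNReal.ofReal_le_ofReal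
    have hS3 : |ξ| ^ 3 / 128 ≤ S := by
      refine le_trans ?_ ((le_abs_self _).trans hσ)
      have : η₀ ^ 2 ≤ (|ξ| / 3) ^ 2 := by gcongr
      have e : (ξ / 2) ^ 2 = |ξ| ^ 2 / 4 := by rw [sq_abs]; ring
      rw [e]
      calc |ξ| ^ 3 / 128 = A * (|ξ| ^ 2 / 8) := by rw [hA]; ring
        _ ≤ _ := by gcongr; nlinarith
    have hprod : |ξ| ^ 2 / 48 ≤ √S * √A := by
      rw [← Real.sqrt_mul (by linarith)]
      apply Real.le_sqrt_of_sq_le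
      calc (|ξ| ^ 2 / 48) ^ 2 ≤ |ξ| ^ 3 / 128 * (1 / 16 * |ξ|) := by
            have : 0 ≤ |ξ| ^ 4 := by positivity
            nlinarith
        _ ≤ S * A := by gcongr
    have hsA : 0 < √A := Real.sqrt_pos.mpr hApos
    calc |ξ| ^ 2 * S ^ (2 * (b' - 1)) * (2 ^ c * (2 * japMass c) / √A)
        ≤ |ξ| ^ 2 * (1 / √S) * (2 ^ c * (2 * japMass c) / √A) := by gcongr
      _ = 2 ^ c * (2 * japMass c) * (|ξ| ^ 2 / (√S * √A)) := by field_simp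
      _ ≤ _ := by
        gcongr
        rw [div_le_iff₀ (by positivity)]
        linarith

/-- The square of the bilinear constant, up to the `+ 1` that makes it positive; here `c = 2b`. -/
noncomputable def bilinConst (c : ℝ) : ℝ :=
  2 ^ c * (2 * japMass c) * (2 ^ c * (2 * japMass c) * 48)

lemma bilinConst_nonneg (c : ℝ) : 0 ≤ bilinConst c := by
  have := japMass_nonneg c
  unfold bilinConst; positivity

/-- The Schur-type bound: the weight times the squared `L²` norm, over the low-frequency region,
of the kernel `⟨τ₁ - p̃_δ(ξ₁)⟩^{-b} ⟨(τ - τ₁) - p̃_δ(ξ - ξ₁)⟩^{-b}` is bounded. -/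
lemma weighted_kernel_le {b b' δ : ℝ} (hb : 1 / 2 < b) (hb' : b' ≤ 5 / 8) (hδ : 0 < δ)
    (p : ℝ × ℝ) (hξ : |p.2| ≤ δ⁻¹) :
    ENNReal.ofReal (|p.2| ^ 2 * jap (p.1 - ptilde δ p.2) ^ (2 * (b' - 1))) *
      ∫⁻ q : ℝ × ℝ, (Set.indicator {q : ℝ × ℝ | |q.2| ≤ δ⁻¹ ∧ |p.2 - q.2| ≤ δ⁻¹}
        (fun q => ENNReal.ofReal (jap (q.1 - ptilde δ q.2) ^ (-b) *
          jap ((p.1 - q.1) - ptilde δ (p.2 - q.2)) ^ (-b))) q) ^ (2 : ℝ)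
      ≤ ENNReal.ofReal (bilinConst (2 * b)) := by
  have hc : 1 < 2 * b := by linarith
  have hM := japMass_nonneg (2 * b)
  have hpm := measurable_ptilde δ
  set c := 2 * b with hcdef
  set s : Set ℝ := {x : ℝ | |x| ≤ δ⁻¹ ∧ |p.2 - x| ≤ δ⁻¹} with hs
  have hsm : MeasurableSet s :=
    (measurableSet_le (f := fun x : ℝ => |x|) (by fun_prop) measurable_const).inter
      (measurableSet_le (f := fun x : ℝ => |p.2 - x|) (by fun_prop) measurable_const)
  have hsq : ∀ x : ℝ, (jap x ^ (-b)) ^ (2 : ℝ) = jap x ^ (-c) := fun x => by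
    rw [← Real.rpow_mul (jap_pos x).le]; congr 1; rw [hcdef]; ring
  have e1 : ∀ q : ℝ × ℝ, (Set.indicator {q : ℝ × ℝ | |q.2| ≤ δ⁻¹ ∧ |p.2 - q.2| ≤ δ⁻¹}
        (fun q => ENNReal.ofReal (jap (q.1 - ptilde δ q.2) ^ (-b) *
          jap ((p.1 - q.1) - ptilde δ (p.2 - q.2)) ^ (-b))) q) ^ (2 : ℝ)
      = s.indicator 1 q.2 * ENNReal.ofReal (jap (q.1 - ptilde δ q.2) ^ (-c) *
          jap ((p.1 - q.1) - ptilde δ (p.2 - q.2)) ^ (-c)) := by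
    intro q
    by_cases hq : q.2 ∈ s
    · rw [Set.indicator_of_mem (show q ∈ {q : ℝ × ℝ | |q.2| ≤ δ⁻¹ ∧ |p.2 - q.2| ≤ δ⁻¹} from hq),
        Set.indicator_of_mem hq, Pi.one_apply, one_mul,
        ENNReal.ofReal_rpow_of_nonneg
          (mul_nonneg (jap_rpow_nonneg _ _) (jap_rpow_nonneg _ _)) zero_le_two,
        Real.mul_rpow (jap_rpow_nonneg _ _) (jap_rpow_nonneg _ _), hsq, hsq]
    · rw [Set.indicator_of_notMem
          (show q ∉ {q : ℝ × ℝ | |q.2| ≤ δ⁻¹ ∧ |p.2 - q.2| ≤ δ⁻¹} from hq),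
        Set.indicator_of_notMem hq, zero_mul, ENNReal.zero_rpow_of_pos zero_lt_two]
  have hind : Measurable (s.indicator (1 : ℝ → ENNReal)) := measurable_one.indicator hsm
  have e2 : ∫⁻ q : ℝ × ℝ, s.indicator 1 q.2 * ENNReal.ofReal (jap (q.1 - ptilde δ q.2) ^ (-c) *
          jap ((p.1 - q.1) - ptilde δ (p.2 - q.2)) ^ (-c))
      ≤ ENNReal.ofReal (2 ^ c * (2 * japMass c)) * ∫⁻ x, s.indicator
        (fun x => ENNReal.ofReal (jap (p.1 - ptilde δ x - ptilde δ (p.2 - x)) ^ (-c))) x := by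
    rw [Measure.volume_eq_prod, lintegral_prod_symm _ (by fun_prop),
      ← lintegral_const_mul _ (Measurable.indicator (by fun_prop) hsm)]
    refine lintegral_mono fun x => ?_
    dsimp only
    rw [lintegral_const_mul _ (by fun_prop)]
    by_cases hx : x ∈ s
    · rw [Set.indicator_of_mem hx, Set.indicator_of_mem hx, Pi.one_apply, one_mul]
      exact lintegral_jap_mul_jap hc _ _ _
    · rw [Set.indicator_of_notMem hx, zero_mul]
      exact bot_le
  rw [lintegral_congr e1]
  refine (mul_le_mul_right e2 _).trans ?_
  rw [mul_left_comm, bilinConst,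
    ENNReal.ofReal_mul (p := 2 ^ c * (2 * japMass c)) (by positivity)]
  exact mul_le_mul_right (weighted_slice_le hc hb' hδ hξ) _

/-- Fourier-side reduced form of the uniform-in-δ bilinear `X^{s,b}` estimate
(low × low → low) for the scaled ILW: all spatial frequencies restricted to
`|ξ| ≤ δ⁻¹`. A point `p : ℝ × ℝ` denotes `(τ, ξ)`. -/
theorem bilinear_low_low_low (b b' : ℝ) (hb : 1 / 2 < b) (hb' : b' ≤ 5 / 8) :
    ∃ C > 0, ∀ δ ∈ Set.Ioc (0 : ℝ) 1, ∀ f₁ f₂ : ℝ × ℝ → ℝ,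
      Measurable f₁ → Measurable f₂ →
      (∀ p, 0 ≤ f₁ p) → (∀ p, 0 ≤ f₂ p) →
      (∀ τ ξ : ℝ, δ⁻¹ < |ξ| → f₁ (τ, ξ) = 0) →
      (∀ τ ξ : ℝ, δ⁻¹ < |ξ| → f₂ (τ, ξ) = 0) →
      (∫⁻ p : ℝ × ℝ,
          Set.indicator {q : ℝ × ℝ | |q.2| ≤ δ⁻¹}
            (fun q => ENNReal.ofReal
              (|q.2| ^ 2 * jap (q.1 - ptilde δ q.2) ^ (2 * (b' - 1)))) p *
          (∫⁻ q : ℝ × ℝ, ENNReal.ofReal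
              (f₁ q * f₂ (p - q) *
                jap (q.1 - ptilde δ q.2) ^ (-b) *
                jap ((p.1 - q.1) - ptilde δ (p.2 - q.2)) ^ (-b))) ^ 2) ^ ((1 : ℝ) / 2)
        ≤ ENNReal.ofReal C *
          (∫⁻ p : ℝ × ℝ, ENNReal.ofReal (f₁ p ^ 2)) ^ ((1 : ℝ) / 2) *
          (∫⁻ p : ℝ × ℝ, ENNReal.ofReal (f₂ p ^ 2)) ^ ((1 : ℝ) / 2) := by
  have hK0 := bilinConst_nonneg (2 * b)
  -- `+ 1` makes the constant strictly positive.
  refine ⟨√(bilinConst (2 * b) + 1), Real.sqrt_pos.mpr (by linarith), ?_⟩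
  rintro δ ⟨hδ, -⟩ f₁ f₂ hm₁ hm₂ hn₁ hn₂ hs₁ hs₂
  have hpm := measurable_ptilde δ
  set F : ℝ × ℝ → ENNReal := fun p => ∫⁻ q : ℝ × ℝ,
    ENNReal.ofReal (f₁ q ^ 2) * ENNReal.ofReal (f₂ (p - q) ^ 2) with hF
  have hFint : ∫⁻ p, F p = (∫⁻ p : ℝ × ℝ, ENNReal.ofReal (f₁ p ^ 2)) *
      ∫⁻ p : ℝ × ℝ, ENNReal.ofReal (f₂ p ^ 2) := by
    rw [hF, lintegral_lintegral_swap (by fun_prop)]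
    have : ∀ q : ℝ × ℝ, ∫⁻ p : ℝ × ℝ, ENNReal.ofReal (f₁ q ^ 2) * ENNReal.ofReal (f₂ (p - q) ^ 2)
        = ENNReal.ofReal (f₁ q ^ 2) * ∫⁻ p : ℝ × ℝ, ENNReal.ofReal (f₂ p ^ 2) := by
      intro q
      rw [lintegral_const_mul _ (by fun_prop),
        lintegral_sub_right_eq_self (fun p => ENNReal.ofReal (f₂ p ^ 2)) q]
    rw [lintegral_congr this, lintegral_mul_const _ (by fun_prop)]
  -- Cauchy–Schwarz in `q`; the supports of `f₁`, `f₂` allow inserting the low-frequency cutoff `s`.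
  have hpt : ∀ p : ℝ × ℝ, Set.indicator {q : ℝ × ℝ | |q.2| ≤ δ⁻¹}
            (fun q => ENNReal.ofReal
              (|q.2| ^ 2 * jap (q.1 - ptilde δ q.2) ^ (2 * (b' - 1)))) p *
          (∫⁻ q : ℝ × ℝ, ENNReal.ofReal
              (f₁ q * f₂ (p - q) *
                jap (q.1 - ptilde δ q.2) ^ (-b) *
                jap ((p.1 - q.1) - ptilde δ (p.2 - q.2)) ^ (-b))) ^ 2
        ≤ ENNReal.ofReal (bilinConst (2 * b)) * F p := by
    intro p
    by_cases hp : |p.2| ≤ δ⁻¹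
    swap
    · rw [Set.indicator_of_notMem (by exact hp), zero_mul]
      exact bot_le
    rw [Set.indicator_of_mem (by exact hp)]
    set s : Set (ℝ × ℝ) := {q : ℝ × ℝ | |q.2| ≤ δ⁻¹ ∧ |p.2 - q.2| ≤ δ⁻¹} with hs
    have hsm : MeasurableSet s :=
      (measurableSet_le (f := fun q : ℝ × ℝ => |q.2|) (by fun_prop) measurable_const).inter
        (measurableSet_le (f := fun q : ℝ × ℝ => |p.2 - q.2|) (by fun_prop) measurable_const)
    set w : ℝ × ℝ → ENNReal := s.indicator
        (fun q => ENNReal.ofReal (jap (q.1 - ptilde δ q.2) ^ (-b) *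
          jap ((p.1 - q.1) - ptilde δ (p.2 - q.2)) ^ (-b))) with hw
    have hwm : Measurable w := Measurable.indicator (by fun_prop) hsm
    have e1 : ∀ q : ℝ × ℝ, ENNReal.ofReal
              (f₁ q * f₂ (p - q) *
                jap (q.1 - ptilde δ q.2) ^ (-b) *
                jap ((p.1 - q.1) - ptilde δ (p.2 - q.2)) ^ (-b))
          = ((fun q => ENNReal.ofReal (f₁ q * f₂ (p - q))) * w) q := by
      intro q
      rw [Pi.mul_apply, mul_assoc, ENNReal.ofReal_mul (mul_nonneg (hn₁ _) (hn₂ _))]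
      by_cases hq : q ∈ s
      · rw [hw, Set.indicator_of_mem hq]
      · have : f₁ q * f₂ (p - q) = 0 := by
          by_cases h1 : |q.2| ≤ δ⁻¹
          · have h2 : ¬ |p.2 - q.2| ≤ δ⁻¹ := fun h2 => hq ⟨h1, h2⟩
            have := hs₂ (p.1 - q.1) (p.2 - q.2) (not_le.mp h2)
            rw [show p - q = (p.1 - q.1, p.2 - q.2) from rfl, this, mul_zero]
          · rw [show q = (q.1, q.2) from rfl, hs₁ q.1 q.2 (not_le.mp h1), zero_mul]
        simp [this]
    have hCS := ENNReal.lintegral_mul_le_Lp_mul_Lq (volume : Measure (ℝ × ℝ))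
      Real.HolderConjugate.two_two
      (f := fun q => ENNReal.ofReal (f₁ q * f₂ (p - q))) (g := w) (by fun_prop) hwm.aemeasurable
    have e2 : ∫⁻ q : ℝ × ℝ, ENNReal.ofReal (f₁ q * f₂ (p - q)) ^ (2 : ℝ) = F p := by
      refine lintegral_congr fun q => ?_
      rw [ENNReal.ofReal_rpow_of_nonneg (mul_nonneg (hn₁ _) (hn₂ _)) zero_le_two,
        Real.rpow_two, mul_pow, ENNReal.ofReal_mul (sq_nonneg _)]
    rw [e2] at hCS
    rw [lintegral_congr e1]
    have hhalf : ∀ x : ENNReal, (x ^ ((1 : ℝ) / 2)) ^ 2 = x := fun x => by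
      rw [← ENNReal.rpow_natCast, ← ENNReal.rpow_mul]; norm_num
    have hCS2 := pow_le_pow_left' hCS 2
    rw [mul_pow, hhalf, hhalf] at hCS2
    refine (mul_le_mul_right hCS2 _).trans ?_
    rw [mul_left_comm, mul_comm]
    exact mul_le_mul_left (weighted_kernel_le hb hb' hδ p hp) _
  have hFm : Measurable F := Measurable.lintegral_prod_right' (f := fun z : (ℝ × ℝ) × (ℝ × ℝ) =>
    ENNReal.ofReal (f₁ z.2 ^ 2) * ENNReal.ofReal (f₂ (z.1 - z.2) ^ 2)) (by fun_prop)
  have htot := (lintegral_mono (μ := volume) hpt).trans_eq (lintegral_const_mul _ hFm)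
  rw [hFint] at htot
  refine (ENNReal.rpow_le_rpow htot (by norm_num : (0 : ℝ) ≤ 1 / 2)).trans ?_
  rw [ENNReal.mul_rpow_of_nonneg _ _ (by norm_num), ENNReal.mul_rpow_of_nonneg _ _ (by norm_num),
    mul_assoc]
  refine mul_le_mul_left ?_ _
  rw [ENNReal.ofReal_rpow_of_nonneg hK0 (by norm_num), ← Real.sqrt_eq_rpow]
  exact ENNReal.ofReal_le_ofReal (Real.sqrt_le_sqrt (by linarith))
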